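/- arXiv:1809.03984 — 7 statements merged into one kernel-verified Lean document; each statement's English description precedes it below -/
import Mathlib

section
/- Let S be an inf-semilattice ordered Cu-semigroup. Then S satisfies (O6+): whenever a, b, c, x', x, y', y ∈ S satisfy a ≤ b + c, x' ≪ x, x ≤ a, x ≤ b, y' ≪ y, y ≤ a, y ≤ c, there exist e, f ∈ S with a ≤ e + f, x' ≪ e, e ≤ a, e ≤ b, y' ≪ f, f ≤ a, f ≤ c. -/
/-- The way-below (compact containment) relation on a partially ordered set:
`WayBelow x y` holds if whenever `(y n)` is an increasing sequence admitting a
supremum `s` with `y ≤ s`, then `x ≤ y n` for some `n`. -/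
def WayBelow {S : Type*} [PartialOrder S] (x y : S) : Prop :=
  ∀ f : ℕ → S, Monotone f → ∀ s : S, IsLUB (Set.range f) s → y ≤ s → ∃ n, x ≤ f n

/-- An abstract Cuntz semigroup (Cu-semigroup): a positively ordered commutative
monoid satisfying the axioms (O1)-(O4). -/
class CuSemigroup (S : Type*) [AddCommMonoid S] [PartialOrder S] : Prop where
  /-- The order is positive. -/
  zero_le : ∀ x : S, 0 ≤ x
  /-- Addition is order-preserving. -/
  add_le_add : ∀ {x y z w : S}, x ≤ y → z ≤ w → x + z ≤ y + w
  /-- (O1): every increasing sequence has a supremum. -/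
  O1 : ∀ f : ℕ → S, Monotone f → ∃ s : S, IsLUB (Set.range f) s
  /-- (O2): every element is the supremum of a `≪`-increasing sequence. -/
  O2 : ∀ x : S, ∃ f : ℕ → S, (∀ n, WayBelow (f n) (f (n + 1))) ∧ IsLUB (Set.range f) x
  /-- (O3): the way-below relation is additive. -/
  O3 : ∀ {x' x y' y : S}, WayBelow x' x → WayBelow y' y → WayBelow (x' + y') (x + y)
  /-- (O4): addition is compatible with suprema of increasing sequences. -/
  O4 : ∀ (f g : ℕ → S), Monotone f → Monotone g → ∀ a b : S,
        IsLUB (Set.range f) a → IsLUB (Set.range g) b →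
        IsLUB (Set.range fun n => f n + g n) (a + b)

/-- Axiom (O5) (almost algebraic order). -/
def O5 (S : Type*) [AddCommMonoid S] [PartialOrder S] : Prop :=
  ∀ x' x z : S, WayBelow x' x → x ≤ z → ∃ w : S, x' + w ≤ z ∧ z ≤ x + w

/-- Axiom (O6+). -/
def O6plus (S : Type*) [AddCommMonoid S] [PartialOrder S] : Prop :=
  ∀ a b c x' x y' y : S, a ≤ b + c →
    WayBelow x' x → x ≤ a → x ≤ b → WayBelow y' y → y ≤ a → y ≤ c →
    ∃ e f : S, a ≤ e + f ∧ WayBelow x' e ∧ e ≤ a ∧ e ≤ b ∧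
      WayBelow y' f ∧ f ≤ a ∧ f ≤ c

/-- Weak cancellation: `x + z ≪ y + z` implies `x ≪ y`. -/
def WeakCancel (S : Type*) [AddCommMonoid S] [PartialOrder S] : Prop :=
  ∀ x y z : S, WayBelow (x + z) (y + z) → WayBelow x y

/-- A Cu-semigroup is countably based if there is a countable subset `B` such that every
element is the supremum of a `≪`-increasing sequence with elements in `B`. -/
def CountablyBased (S : Type*) [AddCommMonoid S] [PartialOrder S] : Prop :=
  ∃ B : Set S, B.Countable ∧ ∀ x : S, ∃ f : ℕ → S, (∀ n, f n ∈ B) ∧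
    (∀ n, WayBelow (f n) (f (n + 1))) ∧ IsLUB (Set.range f) x

/-- Addition distributes over the infimum operation. -/
def InfDistrib (S : Type*) [AddCommMonoid S] [SemilatticeInf S] : Prop :=
  ∀ x y z : S, (x + z) ⊓ (y + z) = (x ⊓ y) + z

/-- A functional on an ordered monoid: a `[0,∞]`-valued map preserving `0`, addition,
order, and suprema of increasing sequences. -/
def IsFunctional {S : Type*} [AddCommMonoid S] [PartialOrder S] (l : S → ENNReal) : Prop :=
  l 0 = 0 ∧ (∀ x y : S, l (x + y) = l x + l y) ∧ (∀ x y : S, x ≤ y → l x ≤ l y) ∧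
    ∀ (f : ℕ → S) (s : S), Monotone f → IsLUB (Set.range f) s → l s = ⨆ n, l (f n)

/-- An element is soft if each of its way-below approximants `x'` satisfies
`(k+1)·x' ≤ k·x` for some `k`. -/
def Soft {S : Type*} [AddCommMonoid S] [PartialOrder S] (x : S) : Prop :=
  ∀ x' : S, WayBelow x' x → ∃ k : ℕ, (k + 1) • x' ≤ k • x

/-- An element `x` is full if `∞·x = sup_n n·x` exists and dominates every element. -/
def IsFull {S : Type*} [AddCommMonoid S] [PartialOrder S] (x : S) : Prop :=
  ∃ s : S, IsLUB (Set.range fun n : ℕ => n • x) s ∧ ∀ t : S, t ≤ s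

/-- Every inf-semilattice ordered Cu-semigroup satisfies (O6+). -/
theorem o6plus_of_infDistrib {S : Type*} [AddCommMonoid S] [SemilatticeInf S]
    [CuSemigroup S] (hdist : InfDistrib S) :
    O6plus S := by
  intro a b c x' x y' y habc hx hxa hxb hy hya hyc
  have h0 : ∀ u v : S, u ≤ u + v := fun u v => by
    simpa using CuSemigroup.add_le_add (le_refl u) (CuSemigroup.zero_le v)
  have h1 : ∀ u v : S, u ≤ v + u := fun u v => by
    rw [add_comm]; exact h0 u v
  refine ⟨a ⊓ b, a ⊓ c, ?_, ?_, inf_le_left, inf_le_right, ?_, inf_le_left, inf_le_right⟩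
  · rw [← hdist a b (a ⊓ c)]
    refine le_inf (h0 _ _) ?_
    rw [add_comm b, ← hdist a c b]
    exact le_inf (h0 _ _) (by rwa [add_comm])
  · exact fun f hf s hs h => hx f hf s hs ((le_inf hxa hxb).trans h)
  · exact fun f hf s hs h => hy f hf s hs ((le_inf hya hyc).trans h)
end

section
/- Let S be an inf-semilattice ordered Cu-semigroup, let x ∈ S, and let (y_n) be an increasing sequence in S. Then sup_n (x ∧ y_n) = x ∧ (sup_n y_n). -/
/-- In an inf-semilattice ordered Cu-semigroup, binary infima commute with suprema of
increasing sequences: `sup_n (x ⊓ y n) = x ⊓ sup_n y n`. -/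
theorem isLUB_inf_of_isLUB {S : Type*} [AddCommMonoid S] [SemilatticeInf S]
    [CuSemigroup S] (hdist : InfDistrib S)
    (x : S) (y : ℕ → S) (hy : Monotone y) (s : S) (hs : IsLUB (Set.range y) s) :
    IsLUB (Set.range fun n => x ⊓ y n) (x ⊓ s) := by
  constructor
  · rintro _ ⟨n, rfl⟩
    exact inf_le_inf_left x (hs.1 ⟨n, rfl⟩)
  · intro u hu
    obtain ⟨f, hf, hl⟩ := CuSemigroup.O2 (x ⊓ s)
    apply hl.2
    rintro _ ⟨k, rfl⟩
    obtain ⟨n, hn⟩ := hf k y hy s hs ((hl.1 ⟨k + 1, rfl⟩).trans inf_le_right)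
    exact (le_inf ((hl.1 ⟨k, rfl⟩).trans inf_le_left) hn).trans (hu ⟨n, rfl⟩)
end

section
/- Let S be an inf-semilattice ordered Cu-semigroup, let x, y_1, …, y_n ∈ S with n ≥ 1, and let M ≥ 1 be such that x ≤ M·y_k for each k = 1, …, n. Then x ≤ N·(⋀_{k=1}^n y_k), where N = n(M−1)+1. In particular, if x ∝ y_k for each k, then x ∝ ⋀_{k=1}^n y_k. -/
theorem le_inf'_add_aux {S ι : Type*} [AddCommMonoid S] [SemilatticeInf S]
    (hdist : InfDistrib S) (s : Finset ι) (hs : s.Nonempty) (y : ι → S) (x w : S)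
    (h : ∀ k ∈ s, x ≤ y k + w) : x ≤ s.inf' hs y + w := by
  classical
  induction hs using Finset.Nonempty.cons_induction with
  | singleton a => simpa using h a (by simp)
  | cons a s ha hs ih =>
    rw [Finset.inf'_cons hs, ← hdist]
    exact le_inf (h a (by simp)) (ih fun k hk => h k (by simp [hk]))

theorem le_nsmul_inf'_aux {S ι : Type*} [AddCommMonoid S] [SemilatticeInf S] [Fintype ι]
    (hdist : InfDistrib S) (hs : (Finset.univ : Finset ι).Nonempty) (y : ι → S) (x : S)
    (r : ℕ) : ∀ z : S, (∀ c : ι → ℕ, ∑ k, c k = r → x ≤ ∑ k, c k • y k + z) →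
      x ≤ r • Finset.univ.inf' hs y + z := by
  classical
  induction r with
  | zero => intro z h; simpa using h 0 (by simp)
  | succ r ih =>
    intro z h
    rw [succ_nsmul, add_assoc]
    apply ih
    intro c hc
    rw [add_left_comm]
    apply le_inf'_add_aux hdist
    intro k _
    have := h (c + Pi.single k 1) (by simp [Finset.sum_add_distrib, hc])
    simp only [Pi.add_apply, add_smul, Finset.sum_add_distrib] at this
    have e : ∑ j, (Pi.single k 1 : ι → ℕ) j • y j = y k := by
      rw [Finset.sum_eq_single k] <;> simp +contextual [Pi.single_apply]
    rw [e] at this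
    rwa [add_left_comm, ← add_assoc]

/-- In an inf-semilattice ordered Cu-semigroup, if `x ≤ M·y k` for each `k`, then
`x ≤ N·(⋀_k y k)` with `N = n(M−1)+1`; in particular `x ∝ y k` for all `k` implies
`x ∝ ⋀_k y k`. -/
theorem le_nsmul_inf'_of_forall_le_nsmul {S : Type*} [AddCommMonoid S] [SemilatticeInf S]
    [CuSemigroup S] (hdist : InfDistrib S)
    (n M : ℕ) (hn : 1 ≤ n) (hM : 1 ≤ M) (x : S) (y : Fin n → S)
    (h : ∀ k, x ≤ M • y k) :
    x ≤ (n * (M - 1) + 1) •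
      Finset.univ.inf' (Finset.univ_nonempty_iff.mpr ⟨⟨0, hn⟩⟩) y := by
  have h0 := le_nsmul_inf'_aux hdist (Finset.univ_nonempty_iff.mpr ⟨⟨0, hn⟩⟩) y x
    (n * (M - 1) + 1) 0 ?_
  · simpa using h0
  intro c hc
  rw [add_zero]
  obtain ⟨k, hk⟩ : ∃ k, M ≤ c k := by
    by_contra! hcon
    have : ∑ k, c k ≤ ∑ _k : Fin n, (M - 1) :=
      Finset.sum_le_sum fun k _ => by have := hcon k; omega
    simp at this
    omega
  refine (h k).trans ?_
  have hz : ∀ a b : S, a ≤ a + b := fun a b => by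
    simpa using CuSemigroup.add_le_add (le_refl a) (CuSemigroup.zero_le b)
  rw [← Finset.add_sum_erase _ _ (Finset.mem_univ k)]
  refine le_trans ?_ (hz _ _)
  obtain ⟨d, hd⟩ := Nat.exists_eq_add_of_le hk
  rw [hd, add_smul]
  exact hz _ _
end

section
/- Let S be an inf-semilattice ordered Cu-semigroup satisfying (O5) and weak cancellation. Let k ≥ 1, n ≥ 1, and let x', x, y_1, …, y_n ∈ S be such that x' ≪ x, x' ≪ y_1 + ⋯ + y_n, and k·y_j ≤ x for each j. Then there exist z_1, …, z_k ∈ S such that z_1 + ⋯ + z_k ≤ x and x' ≤ M·z_j for each j, where M = max{ n^r·(k−r) + n^{r−1} : r = 1, …, k }. -/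
section Helpers

variable {S : Type*} [AddCommMonoid S] [SemilatticeInf S] [CuSemigroup S]

theorem cuIsOrdered : IsOrderedAddMonoid S where
  add_le_add_left := fun _ _ h c => CuSemigroup.add_le_add h (le_refl c)

theorem WayBelow.le' {x y : S} (h : WayBelow x y) : x ≤ y := by
  obtain ⟨_, hn⟩ := h (fun _ => y) monotone_const y (by simp) le_rfl
  exact hn

theorem WayBelow.trans_le' {x y z : S} (h : WayBelow x y) (h' : y ≤ z) : WayBelow x z :=
  fun f hf s hs hz => h f hf s hs (h'.trans hz)

theorem WayBelow.le_trans' {x y z : S} (h' : x ≤ y) (h : WayBelow y z) : WayBelow x z :=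
  fun f hf s hs hz => (h f hf s hs hz).imp fun _ hn => h'.trans hn

theorem wb_zero (x : S) : WayBelow 0 x := fun _ _ _ _ _ => ⟨0, CuSemigroup.zero_le _⟩

theorem wb_seq (x : S) : ∃ f : ℕ → S, Monotone f ∧ (∀ n, WayBelow (f n) x) ∧
    IsLUB (Set.range f) x := by
  obtain ⟨f, h1, h2⟩ := CuSemigroup.O2 x
  exact ⟨f, monotone_nat_of_le_succ fun n => (h1 n).le',
    fun n => (h1 n).trans_le' (h2.1 ⟨n + 1, rfl⟩), h2⟩

theorem wb_interp {x y : S} (h : WayBelow x y) : ∃ z, WayBelow x z ∧ WayBelow z y := by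
  obtain ⟨f, h1, h2⟩ := CuSemigroup.O2 y
  obtain ⟨n, hn⟩ := h f (monotone_nat_of_le_succ fun n => (h1 n).le') y h2 le_rfl
  exact ⟨f (n + 1), WayBelow.le_trans' hn (h1 n),
    (h1 (n + 1)).trans_le' (h2.1 ⟨n + 2, rfl⟩)⟩

theorem sum_lub {ι : Type*} (s : Finset ι) (f : ι → ℕ → S) (y : ι → S)
    (hf : ∀ i, Monotone (f i)) (hy : ∀ i, IsLUB (Set.range (f i)) (y i)) :
    Monotone (fun m => ∑ i ∈ s, f i m) ∧
    IsLUB (Set.range fun m => ∑ i ∈ s, f i m) (∑ i ∈ s, y i) := by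
  classical
  have : IsOrderedAddMonoid S := cuIsOrdered
  refine ⟨fun a b hab => Finset.sum_le_sum fun i _ => hf i hab, ?_⟩
  induction s using Finset.induction_on with
  | empty => simp
  | insert a s ha ih =>
    simp only [Finset.sum_insert ha]
    exact CuSemigroup.O4 _ _ (hf a) (fun a b hab => Finset.sum_le_sum fun i _ => hf i hab)
      _ _ (hy a) ih

theorem sum_interp {n : ℕ} {x : S} {y : Fin n → S} (h : WayBelow x (∑ j, y j)) :
    ∃ y' : Fin n → S, (∀ j, WayBelow (y' j) (y j)) ∧ WayBelow x (∑ j, y' j) := by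
  choose f h1 h2 h3 using fun j => wb_seq (y j)
  obtain ⟨z, hz, hz'⟩ := wb_interp h
  obtain ⟨hm, hl⟩ := sum_lub Finset.univ f y h1 h3
  obtain ⟨m, hm⟩ := hz' _ hm _ hl le_rfl
  exact ⟨fun j => f j m, fun j => h2 j m, hz.trans_le' hm⟩

theorem nsmul_interp {N : ℕ} {x y : S} (h : WayBelow x (N • y)) :
    ∃ y', WayBelow y' y ∧ WayBelow x (N • y') := by
  obtain ⟨f, h1, h2, h3⟩ := wb_seq y
  obtain ⟨z, hz, hz'⟩ := wb_interp h
  obtain ⟨hm, hl⟩ := sum_lub (Finset.univ : Finset (Fin N)) (fun _ => f) (fun _ => y)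
    (fun _ => h1) (fun _ => h3)
  obtain ⟨m, hm⟩ := hz' _ hm _ hl (by simp)
  exact ⟨f m, h2 m, hz.trans_le' (by simpa using hm)⟩

theorem wb_msum {ι : Type*} (s : Multiset ι) (v' v : ι → S) (h : ∀ i, WayBelow (v' i) (v i)) :
    WayBelow (s.map v').sum (s.map v).sum := by
  induction s using Multiset.induction_on with
  | empty => simpa using wb_zero (0 : S)
  | cons a s ih => simpa using CuSemigroup.O3 (h a) ih

theorem wb_nsmul (k : ℕ) {a b : S} (h : WayBelow a b) : WayBelow (k • a) (k • b) := by
  simpa using wb_msum (Multiset.replicate k ()) (fun _ => a) (fun _ => b) (fun _ => h)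

/-- Distributing a multiple of an infimum. -/
theorem le_nsmul_inf {ι : Type*} (hdist : InfDistrib S) (t : Finset ι) (ht : t.Nonempty)
    (u : ι → S) (x : S) (N : ℕ) :
    ∀ a : S, (∀ s : Multiset ι, s.card = N → (∀ i ∈ s, i ∈ t) → x ≤ (s.map u).sum + a) →
      x ≤ N • t.inf' ht u + a := by
  induction N with
  | zero => intro a h; simpa using h 0 (by simp) (by simp)
  | succ N ih =>
    intro a h
    have key : x ≤ N • t.inf' ht u + (t.inf' ht u + a) := by
      apply ih
      intro s hs hst
      have e : t.inf' ht u + ((s.map u).sum + a) =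
          t.inf' ht (fun j => u j + ((s.map u).sum + a)) :=
        Finset.apply_inf'_eq_inf'_comp (s := t) ht (f := u)
          (fun z => z + ((s.map u).sum + a)) (fun p q => (hdist p q _).symm)
      rw [add_left_comm, e]
      refine Finset.le_inf' _ _ fun j hj => ?_
      have := h (j ::ₘ s) (by simp [hs]) (by
        intro i hi
        rcases Multiset.mem_cons.1 hi with rfl | hi
        · exact hj
        · exact hst i hi)
      simpa [add_assoc] using this
    rwa [succ_nsmul, add_assoc]

theorem pigeon {n k : ℕ} (s : Multiset (Fin n)) (h : s.card = n * k + 1) :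
    ∃ j, k + 1 ≤ s.count j := by
  by_contra! hc
  have h1 : ∑ j, s.count j = s.card := Multiset.sum_count_eq_card (fun a _ => Finset.mem_univ a)
  have h2 : ∑ j, s.count j ≤ ∑ _j : Fin n, k :=
    Finset.sum_le_sum fun j _ => Nat.lt_succ_iff.1 (hc j)
  simp at h2
  omega

theorem sum_bound {n k : ℕ} (x : S) (y : Fin n → S) (hky : ∀ j, (k + 1) • y j ≤ x)
    (s : Multiset (Fin n)) (h : s.card = n * k + 1) :
    x + (s.map fun j => k • y j).sum ≤ (n * k + 1) • x := by
  have : IsOrderedAddMonoid S := cuIsOrdered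
  obtain ⟨j, hj⟩ := pigeon s h
  obtain ⟨t, rfl⟩ := Multiset.le_iff_exists_add.1 (Multiset.le_count_iff_replicate_le.1 hj)
  simp only [Multiset.card_add, Multiset.card_replicate] at h
  have hv : ∀ j, k • y j ≤ x := fun j => le_trans
    (by rw [succ_nsmul]; exact le_add_of_nonneg_right (CuSemigroup.zero_le _)) (hky j)
  have h1 : (t.map fun j => k • y j).sum ≤ t.card • x := by
    have := Multiset.sum_le_card_nsmul (t.map fun j => k • y j) x (by
      intro a ha
      obtain ⟨i, _, rfl⟩ := Multiset.mem_map.1 ha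
      exact hv i)
    simpa using this
  have h2 : (k + 1) • k • y j ≤ k • x := by
    rw [smul_smul, mul_comm, ← smul_smul]
    exact nsmul_le_nsmul_right (hky j) k
  calc _ = x + ((k + 1) • k • y j + (t.map fun j => k • y j).sum) := by
          rw [Multiset.map_add, Multiset.sum_add, Multiset.map_replicate, Multiset.sum_replicate]
    _ ≤ x + (k • x + t.card • x) := by gcongr
    _ = (n * k + 1) • x := by
      rw [← h, add_nsmul, add_nsmul, one_nsmul]; abel

theorem step (hdist : InfDistrib S) (h5 : O5 S) (hwc : WeakCancel S)
    (k n : ℕ) (hk : 1 ≤ k) (hn : 1 ≤ n) (x' x : S) (y : Fin n → S)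
    (hxx : WayBelow x' x) (hxy : WayBelow x' (∑ j, y j))
    (hky : ∀ j, (k + 1) • y j ≤ x) :
    ∃ (z w' w : S) (y' : Fin n → S), WayBelow w' w ∧ WayBelow w' (∑ j, y' j) ∧
      (∀ j, k • y' j ≤ w) ∧ z + w ≤ x ∧ x' ≤ (n * k + 1) • z ∧ x' ≤ n • w' := by
  have : IsOrderedAddMonoid S := cuIsOrdered
  have : Nonempty (Fin n) := ⟨⟨0, hn⟩⟩
  obtain ⟨y1, hy1, hx1⟩ := sum_interp hxy
  obtain ⟨y2, hy2, hx2⟩ := sum_interp hx1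
  obtain ⟨y3, hy3, hx3⟩ := sum_interp hx2
  obtain ⟨x'', hx', hx''⟩ := wb_interp hxx
  have hle : ∀ j, k • y1 j ≤ x := fun j =>
    (wb_nsmul k (hy1 j)).le'.trans (le_trans
    (by rw [succ_nsmul]; exact le_add_of_nonneg_right (CuSemigroup.zero_le _)) (hky j))
  choose u hu1 hu2 using fun j => h5 (k • y2 j) (k • y1 j) x (wb_nsmul k (hy2 j)) (hle j)
  set z := Finset.univ.inf' Finset.univ_nonempty u with hz
  have hzu : ∀ j, z ≤ u j := fun j => Finset.inf'_le _ (Finset.mem_univ j)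
  have hzx : z ≤ x := (hzu ⟨0, hn⟩).trans
    (le_trans (le_add_of_nonneg_left (CuSemigroup.zero_le _)) (hu1 ⟨0, hn⟩))
  have hNz : x'' ≤ (n * k + 1) • z := by
    have := le_nsmul_inf hdist Finset.univ Finset.univ_nonempty u x'' (n * k + 1) 0 (by
      intro s hs _
      rw [add_zero]
      refine (hwc _ _ (s.map fun j => k • y1 j).sum ?_).le'
      refine (CuSemigroup.O3 hx''
        (wb_msum s _ (fun j => k • y j) fun j => wb_nsmul k (hy1 j))).trans_le' ?_
      refine (sum_bound x y hky s hs).trans ?_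
      rw [← hs, ← Multiset.sum_map_add, ← Multiset.sum_replicate, ← Multiset.map_const']
      exact Multiset.sum_map_le_sum_map _ _ fun j _ => by rw [add_comm]; exact hu2 j)
    simpa using this
  obtain ⟨z2, hz2, hxz2⟩ := nsmul_interp (hx'.trans_le' hNz)
  obtain ⟨z1, hz1, hxz1⟩ := nsmul_interp hxz2
  obtain ⟨w, hw1, hw2⟩ := h5 z1 z2 x hz1 (hz2.le'.trans hzx)
  have hyw : ∀ j, k • y3 j ≤ w := by
    intro j
    refine (hwc _ _ z2 ?_).le'
    refine (CuSemigroup.O3 (wb_nsmul k (hy3 j)) (hz2.trans_le' (hzu j))).trans_le' ?_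
    rw [add_comm w]
    exact (hu1 j).trans hw2
  have hyw1 : ∀ j, y3 j ≤ w := fun j => by
    refine le_trans ?_ (hyw j)
    simpa using nsmul_le_nsmul_left (CuSemigroup.zero_le (y3 j)) hk
  have hsum : ∑ j, y3 j ≤ n • w := by
    simpa using Finset.sum_le_card_nsmul Finset.univ y3 w (fun j _ => hyw1 j)
  have hnw : ∑ j, y3 j ≤ n • (w ⊓ ∑ j, y3 j) := by
    have := le_nsmul_inf hdist (Finset.univ : Finset Bool) Finset.univ_nonempty
      (fun b => if b then w else ∑ j, y3 j) (∑ j, y3 j) n 0 (by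
      intro s hs _
      rw [add_zero]
      by_cases hf : false ∈ s
      · obtain ⟨t, rfl⟩ := Multiset.exists_cons_of_mem hf
        simp only [Multiset.map_cons, Multiset.sum_cons]
        refine le_add_of_le_of_nonneg (by simp) (CuSemigroup.zero_le _)
      · have : s = Multiset.replicate n true := by
          refine Multiset.eq_replicate.2 ⟨hs, fun b hb => ?_⟩
          cases b
          · exact absurd hb hf
          · rfl
        rw [this]
        simpa using hsum)
    rw [add_zero] at this
    refine this.trans (nsmul_le_nsmul_right (le_inf ?_ ?_) n)
    · exact Finset.inf'_le_of_le _ (Finset.mem_univ true) (by simp)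
    · exact Finset.inf'_le_of_le _ (Finset.mem_univ false) (by simp)
  obtain ⟨w', hw', hxw'⟩ := nsmul_interp (hx3.trans_le' hnw)
  exact ⟨z1, w', w, y3, hw'.trans_le' inf_le_left, hw'.trans_le' inf_le_right, hyw, hw1,
    hxz1.le', hxw'.le'⟩

end Helpers

/-- Lemma on extracting `k` comparable summands: in an inf-semilattice ordered
Cu-semigroup with (O5) and weak cancellation, if `x' ≪ x`, `x' ≪ Σ_j y j` and
`k·y j ≤ x` for each `j`, then there are `z 1, …, z k` with `Σ z j ≤ x` and
`x' ≤ M·z j` for all `j`, where `M = max {n^r(k−r) + n^(r−1) : r = 1,…,k}`. -/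
theorem exists_summands_of_weaklyDivisible {S : Type*} [AddCommMonoid S]
    [SemilatticeInf S] [CuSemigroup S] (hdist : InfDistrib S)
    (h5 : O5 S) (hwc : WeakCancel S)
    (k n : ℕ) (hk : 1 ≤ k) (hn : 1 ≤ n) (x' x : S) (y : Fin n → S)
    (hxx : WayBelow x' x) (hxy : WayBelow x' (∑ j, y j))
    (hky : ∀ j, k • y j ≤ x) :
    ∃ z : Fin k → S, (∑ j, z j) ≤ x ∧
      ∀ j, x' ≤ ((Finset.Icc 1 k).sup fun r => n ^ r * (k - r) + n ^ (r - 1)) • z j := by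
  have : IsOrderedAddMonoid S := cuIsOrdered
  induction k, hk using Nat.le_induction generalizing x' x y with
  | base => exact ⟨fun _ => x', by simpa using hxx.le', fun j => by simp⟩
  | succ k hk ih =>
    obtain ⟨z, w', w, y', h1, h2, h3, h4, h6, h7⟩ :=
      step hdist h5 hwc k n hk hn x' x y hxx hxy hky
    obtain ⟨zs, hs1, hs2⟩ := ih w' w y' h1 h2 h3
    refine ⟨Fin.cons z zs, ?_, ?_⟩
    · rw [Fin.sum_univ_succ]
      simp only [Fin.cons_zero, Fin.cons_succ]
      exact (CuSemigroup.add_le_add le_rfl hs1).trans h4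
    · intro j
      refine Fin.cases ?_ (fun i => ?_) j
      · rw [Fin.cons_zero]
        refine h6.trans (nsmul_le_nsmul_left (CuSemigroup.zero_le _) ?_)
        have := Finset.le_sup (f := fun r => n ^ r * (k + 1 - r) + n ^ (r - 1))
          (show 1 ∈ Finset.Icc 1 (k + 1) by simp)
        simpa using this
      · rw [Fin.cons_succ]
        refine h7.trans ((nsmul_le_nsmul_right (hs2 i) n).trans ?_)
        rw [smul_smul]
        refine nsmul_le_nsmul_left (CuSemigroup.zero_le _) ?_
        obtain ⟨r, hr, he⟩ := Finset.exists_mem_eq_sup (Finset.Icc 1 k) ⟨1, by simp [hk]⟩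
          (fun r => n ^ r * (k - r) + n ^ (r - 1))
        rw [he]
        obtain ⟨hr1, hr2⟩ := Finset.mem_Icc.1 hr
        have := Finset.le_sup (f := fun r => n ^ r * (k + 1 - r) + n ^ (r - 1))
          (show r + 1 ∈ Finset.Icc 1 (k + 1) by simp [hr2])
        refine le_trans (le_of_eq ?_) this
        obtain ⟨q, rfl⟩ : ∃ q, r = q + 1 := ⟨r - 1, by omega⟩
        simp only [Nat.add_sub_add_right, Nat.add_sub_cancel]
        ring
end

section
/- Let S be a Cu-semigroup and let (x_j)_{j≥1} be a sequence in S such that x_j ∝ x_{j+1} for every j. Then the element x = Σ_{j=1}^∞ x_j, defined as the supremum of the increasing sequence of partial sums (Σ_{j=1}^m x_j)_m, is soft. -/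
/-- If `(x j)` is a sequence in a Cu-semigroup with `x j ∝ x (j+1)` for every `j`, then
the supremum of the partial sums `Σ_{j<m} x j` is a soft element. -/
theorem soft_of_sum_propto {S : Type*} [AddCommMonoid S] [PartialOrder S] [CuSemigroup S]
    (x : ℕ → S) (hprop : ∀ j, ∃ n : ℕ, x j ≤ n • x (j + 1))
    (s : S) (hs : IsLUB (Set.range fun m => ∑ j ∈ Finset.range m, x j) s) :
    Soft s := by
  intro x' hx'
  have mono : ∀ {a b : S} (k : ℕ), a ≤ b → k • a ≤ k • b := by
    intro a b k h
    induction k with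
    | zero => simp
    | succ k ih =>
      rw [succ_nsmul, succ_nsmul]
      exact CuSemigroup.add_le_add ih h
  have hP : Monotone (fun m => ∑ j ∈ Finset.range m, x j) := by
    apply monotone_nat_of_le_succ
    intro m
    have := CuSemigroup.add_le_add (le_refl (∑ j ∈ Finset.range m, x j))
      (CuSemigroup.zero_le (x m))
    simpa [Finset.sum_range_succ] using this
  have key : ∀ m, ∃ k : ℕ, ∑ j ∈ Finset.range m, x j ≤ k • x m := by
    intro m
    induction m with
    | zero => exact ⟨0, by simp⟩
    | succ m ih =>
      obtain ⟨k, hk⟩ := ih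
      obtain ⟨n, hn⟩ := hprop m
      refine ⟨n * (k + 1), ?_⟩
      rw [Finset.sum_range_succ, mul_nsmul]
      refine le_trans ?_ (mono (k + 1) hn)
      rw [succ_nsmul]
      exact CuSemigroup.add_le_add hk le_rfl
  obtain ⟨m, hm⟩ := hx' _ hP s hs le_rfl
  obtain ⟨k, hk⟩ := key m
  refine ⟨k, (mono (k + 1) hm).trans ?_⟩
  refine le_trans ?_ (mono k (hs.1 ⟨m + 1, rfl⟩))
  simp only [Finset.sum_range_succ]
  rw [succ_nsmul, nsmul_add]
  exact CuSemigroup.add_le_add le_rfl hk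
end

section
/- Let S be an inf-semilattice ordered Cu-semigroup, let x, y ∈ S, and let n ∈ ℕ. Then for every functional λ on S one has λ(n·(x ∧ y)) = λ((n·x) ∧ (n·y)). (That is, the elements n·(x ∧ y) and (n·x) ∧ (n·y) have the same rank, i.e., the same image under every functional.) -/
theorem aux_le_nsmul_inf {S : Type*} [AddCommMonoid S] [SemilatticeInf S]
    (hdist : InfDistrib S) (x y w : S) (k : ℕ) :
    ∀ c : S, (∀ i j : ℕ, i + j = k → w ≤ i • x + j • y + c) → w ≤ k • (x ⊓ y) + c := by
  induction k with
  | zero => intro c h; simpa using h 0 0 rfl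
  | succ k ih =>
    intro c h
    have h1 : w ≤ k • (x ⊓ y) + (x + c) := by
      apply ih
      intro i j hij
      have := h (i + 1) j (by omega)
      rw [succ_nsmul] at this
      convert this using 1
      abel
    have h2 : w ≤ k • (x ⊓ y) + (y + c) := by
      apply ih
      intro i j hij
      have := h i (j + 1) (by omega)
      rw [succ_nsmul] at this
      convert this using 1
      abel
    have h3 := hdist x y (k • (x ⊓ y) + c)
    have h4 : (k + 1) • (x ⊓ y) + c = (x ⊓ y) + (k • (x ⊓ y) + c) := by
      rw [succ_nsmul]; abel
    rw [h4, ← h3]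
    apply le_inf
    · convert h1 using 1; abel
    · convert h2 using 1; abel

theorem aux_nsmul_mono {S : Type*} [AddCommMonoid S] [PartialOrder S]
    [CuSemigroup S] {a b : S} (h : a ≤ b) (n : ℕ) : n • a ≤ n • b := by
  induction n with
  | zero => simp
  | succ n ih => rw [succ_nsmul, succ_nsmul]; exact CuSemigroup.add_le_add ih h

theorem aux_key {S : Type*} [AddCommMonoid S] [SemilatticeInf S]
    [CuSemigroup S] (hdist : InfDistrib S) (x y : S) (m : ℕ) :
    ((m + 1) • x ⊓ (m + 1) • y) + m • (x ⊓ y) ≤ (m + 1) • (x ⊓ y) + m • (x ⊓ y) := by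
  rw [← add_nsmul]
  have := aux_le_nsmul_inf hdist x y
    (((m + 1) • x ⊓ (m + 1) • y) + m • (x ⊓ y)) (m + 1 + m) 0
  rw [add_zero] at this
  apply this
  intro i j hij
  have hz : ∀ p q : ℕ, p + q = m → m • (x ⊓ y) ≤ p • x + q • y := by
    intro p q hpq
    rw [← hpq, add_nsmul]
    exact CuSemigroup.add_le_add (aux_nsmul_mono inf_le_left p) (aux_nsmul_mono inf_le_right q)
  rw [add_zero]
  rcases le_or_gt (m + 1) i with hi | hi
  · obtain ⟨p, rfl⟩ := Nat.exists_eq_add_of_le hi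
    rw [add_nsmul (x) (m + 1) p, add_assoc]
    exact CuSemigroup.add_le_add inf_le_left (hz p j (by omega))
  · obtain ⟨q, rfl⟩ := Nat.exists_eq_add_of_le (show m + 1 ≤ j by omega)
    rw [add_nsmul (y) (m + 1) q, add_left_comm]
    exact CuSemigroup.add_le_add inf_le_right (hz i q (by omega))

/-- In an inf-semilattice ordered Cu-semigroup, `n·(x ⊓ y)` and `(n·x) ⊓ (n·y)` agree
under every functional, i.e. they have the same rank. -/
theorem functional_nsmul_inf {S : Type*} [AddCommMonoid S] [SemilatticeInf S]
    [CuSemigroup S] (hdist : InfDistrib S)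
    (x y : S) (n : ℕ) (lam : S → ENNReal) (hlam : IsFunctional lam) :
    lam (n • (x ⊓ y)) = lam ((n • x) ⊓ (n • y)) := by
  obtain ⟨h0, hadd, hmono, -⟩ := hlam
  have hle : n • (x ⊓ y) ≤ (n • x) ⊓ (n • y) :=
    le_inf (aux_nsmul_mono inf_le_left n) (aux_nsmul_mono inf_le_right n)
  apply le_antisymm (hmono _ _ hle)
  cases n with
  | zero => simp
  | succ m =>
    by_cases ht : lam (m • (x ⊓ y)) = ⊤
    · have : lam ((m + 1) • (x ⊓ y)) = ⊤ := by rw [succ_nsmul, hadd, ht, top_add]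
      rw [this]; exact le_top
    · have := hmono _ _ (aux_key hdist x y m)
      rw [hadd, hadd] at this
      exact (ENNReal.add_le_add_iff_right ht).1 this
end

section
/- Let S be a countably based, inf-semilattice ordered Cu-semigroup satisfying (O5). Let x, y, z ∈ S and let n ≥ 1 be a natural number. If λ(z) ≤ n·λ(x) and λ(z) ≤ n·λ(y) for every functional λ on S, then λ(z) ≤ n·λ(x ∧ y) for every functional λ on S. (This expresses that the rank map x ↦ (λ ↦ λ(x)) preserves binary infima.) -/
open scoped ENNReal

theorem cuOrdered {S : Type*} [AddCommMonoid S] [PartialOrder S] [CuSemigroup S] :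
    IsOrderedAddMonoid S :=
  { add_le_add_left := fun _ _ h c => CuSemigroup.add_le_add h le_rfl }

theorem wb_le {S : Type*} [PartialOrder S] {x y : S} (h : WayBelow x y) : x ≤ y := by
  obtain ⟨_, hk⟩ := h (fun _ => y) (fun _ _ _ => le_rfl) y (by simp) le_rfl
  exact hk

theorem wb_trans_le {S : Type*} [PartialOrder S] {x y z : S} (h : WayBelow x y) (h' : y ≤ z) :
    WayBelow x z := fun f hf s hs hz => h f hf s hs (h'.trans hz)

theorem le_wb_trans {S : Type*} [PartialOrder S] {x y z : S} (h' : x ≤ y) (h : WayBelow y z) :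
    WayBelow x z := fun f hf s hs hz => by
  obtain ⟨k, hk⟩ := h f hf s hs hz
  exact ⟨k, h'.trans hk⟩

theorem wb_seq_mono {S : Type*} [PartialOrder S] {f : ℕ → S}
    (h : ∀ n, WayBelow (f n) (f (n + 1))) : Monotone f :=
  monotone_nat_of_le_succ fun n => wb_le (h n)

/-- additive order preserving maps -/
structure PreF {S : Type*} [AddCommMonoid S] [PartialOrder S] (f : S → ℝ≥0∞) : Prop where
  zero : f 0 = 0
  add : ∀ x y, f (x + y) = f x + f y
  mono : ∀ x y, x ≤ y → f x ≤ f y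

noncomputable def regF {S : Type*} [PartialOrder S] (f : S → ℝ≥0∞) (s : S) : ℝ≥0∞ :=
  ⨆ r : {r : S // WayBelow r s}, f r

theorem le_regF {S : Type*} [PartialOrder S] (f : S → ℝ≥0∞) {r s : S} (h : WayBelow r s) :
    f r ≤ regF f s := le_iSup (fun r : {r : S // WayBelow r s} => f r) ⟨r, h⟩

theorem regF_le {S : Type*} [AddCommMonoid S] [PartialOrder S] {f : S → ℝ≥0∞} (hf : PreF f)
    (s : S) : regF f s ≤ f s := iSup_le fun r => hf.mono _ _ (wb_le r.2)

theorem regF_functional {S : Type*} [AddCommMonoid S] [PartialOrder S] [CuSemigroup S]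
    {f : S → ℝ≥0∞} (hf : PreF f) : IsFunctional (regF f) := by
  have hmono : ∀ x y : S, x ≤ y → regF f x ≤ regF f y := fun x y hxy =>
    iSup_le fun r => le_regF f (wb_trans_le r.2 hxy)
  refine ⟨?_, ?_, hmono, ?_⟩
  · exact le_antisymm ((regF_le hf 0).trans hf.zero.le) bot_le
  · intro x y
    apply le_antisymm
    · refine iSup_le fun r => ?_
      obtain ⟨g, hg, hgx⟩ := CuSemigroup.O2 x
      obtain ⟨k, hk, hky⟩ := CuSemigroup.O2 y
      obtain ⟨m, hm⟩ := r.2 _ (fun i j hij => CuSemigroup.add_le_add (wb_seq_mono hg hij)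
        (wb_seq_mono hk hij)) _ (CuSemigroup.O4 g k (wb_seq_mono hg) (wb_seq_mono hk) x y hgx hky)
        le_rfl
      calc f r ≤ f (g m + k m) := hf.mono _ _ hm
        _ = f (g m) + f (k m) := hf.add _ _
        _ ≤ _ := add_le_add
          (le_regF f (wb_trans_le (hg m) (hgx.1 ⟨m + 1, rfl⟩)))
          (le_regF f (wb_trans_le (hk m) (hky.1 ⟨m + 1, rfl⟩)))
    · have hz : ∀ u : S, Nonempty {r : S // WayBelow r u} := fun u =>
        ⟨0, fun f _ _ _ _ => ⟨0, CuSemigroup.zero_le _⟩⟩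
      have := hz x
      have := hz y
      refine ENNReal.iSup_add_iSup_le fun r t => ?_
      rw [← hf.add]
      exact le_regF f (CuSemigroup.O3 r.2 t.2)
  · intro g s hg hs
    apply le_antisymm
    · refine iSup_le fun r => ?_
      obtain ⟨g', hg', hs'⟩ := CuSemigroup.O2 s
      obtain ⟨m, hm⟩ := r.2 g' (wb_seq_mono hg') s hs' le_rfl
      have h2 : WayBelow (g' (m+1)) s := wb_trans_le (hg' (m+1)) (hs'.1 ⟨m + 2, rfl⟩)
      obtain ⟨j, hj⟩ := h2 g hg s hs le_rfl
      exact (le_regF f (le_wb_trans hm (wb_trans_le (hg' m) hj))).trans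
        (le_iSup (fun n => regF f (g n)) j)
    · exact iSup_le fun j => hmono _ _ (hs.1 ⟨j, rfl⟩)

theorem le_inf_add_inf {S : Type*} [AddCommMonoid S] [SemilatticeInf S]
    (hdist : InfDistrib S) {w a b c d : S} (h1 : w ≤ a + c) (h2 : w ≤ a + d) (h3 : w ≤ b + c)
    (h4 : w ≤ b + d) : w ≤ a ⊓ b + c ⊓ d := by
  rw [← hdist, add_comm a, add_comm b, ← hdist, ← hdist]
  refine le_inf (le_inf ?_ ?_) (le_inf ?_ ?_) <;> rwa [add_comm]

theorem le_nsmul_inf_add {S : Type*} [AddCommMonoid S] [SemilatticeInf S]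
    (hdist : InfDistrib S) (x y : S) (m : ℕ) : ∀ c w : S,
    (∀ i j : ℕ, i + j = m → w ≤ i • x + j • y + c) → w ≤ m • (x ⊓ y) + c := by
  induction m with
  | zero => intro c w h; simpa using h 0 0 rfl
  | succ m ih =>
    intro c w h
    rw [succ_nsmul, add_assoc]
    refine ih _ _ fun i j hij => ?_
    have e : i • x + j • y + (x ⊓ y + c) = (x ⊓ y) + (i • x + j • y + c) := by abel
    rw [e, ← hdist]
    refine le_inf ?_ ?_
    · refine (h (i+1) j (by omega)).trans (le_of_eq ?_)
      rw [succ_nsmul]; abel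
    · refine (h i (j+1) (by omega)).trans (le_of_eq ?_)
      rw [succ_nsmul]; abel

theorem inf_nsmul_add_le {S : Type*} [AddCommMonoid S] [SemilatticeInf S] [IsOrderedAddMonoid S]
    (hdist : InfDistrib S) (x y : S) (k : ℕ) :
    k • x ⊓ k • y + k • (x ⊓ y) ≤ (k + k) • (x ⊓ y) := by
  have key : ∀ i j : ℕ, (i + j) • (x ⊓ y) ≤ i • x + j • y := fun i j => by
    rw [add_nsmul]
    exact add_le_add (nsmul_le_nsmul_right inf_le_left i) (nsmul_le_nsmul_right inf_le_right j)
  have := le_nsmul_inf_add hdist x y (k + k) 0 (k • x ⊓ k • y + k • (x ⊓ y)) ?_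
  · simpa using this
  intro i j hij
  rw [add_zero]
  rcases le_total k i with h | h
  · obtain ⟨d, rfl⟩ := Nat.exists_eq_add_of_le h
    have : k = d + j := by omega
    calc _ ≤ k • x + (d • x + j • y) := add_le_add inf_le_left (by
            conv_lhs => rw [this]
            exact key d j)
      _ = _ := by rw [add_nsmul]; abel
  · obtain ⟨d, rfl⟩ := Nat.exists_eq_add_of_le (show k ≤ j by omega)
    have : k = i + d := by omega
    calc _ ≤ k • y + (i • x + d • y) := add_le_add inf_le_right (by
            conv_lhs => rw [this]
            exact key i d)
      _ = _ := by rw [add_nsmul]; abel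

section
variable {S : Type*} [AddCommMonoid S] [SemilatticeInf S] [IsOrderedAddMonoid S]

theorem PreF.nsmul {l : S → ℝ≥0∞} (hl : PreF l) (k : ℕ) (a : S) : l (k • a) = k * l a := by
  induction k with
  | zero => simp [hl.zero]
  | succ k ih => rw [succ_nsmul, hl.add, ih]; push_cast; ring

noncomputable def cF (l : S → ℝ≥0∞) (x y : S) (k : ℕ) (s : S) : ℝ≥0∞ :=
  l ((k • x + s) ⊓ k • y) - k * l (x ⊓ y)

noncomputable def l1 (l : S → ℝ≥0∞) (x y s : S) : ℝ≥0∞ := ⨆ k, cF l x y k s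

noncomputable def l2 (l : S → ℝ≥0∞) (x y s : S) : ℝ≥0∞ :=
  ⨆ r : {r : S // r ≤ s ∧ l r ≠ ∞}, (l r - l1 l x y r)

variable {l : S → ℝ≥0∞} (hl : PreF l) (hdist : InfDistrib S) (h0 : ∀ s : S, 0 ≤ s) {x y : S}
  (hA : l (x ⊓ y) ≠ ∞)

include hl h0

theorem cF_add (k : ℕ) (s : S) : cF l x y k s + k * l (x ⊓ y) = l ((k • x + s) ⊓ k • y) := by
  refine tsub_add_cancel_of_le ?_
  rw [← hl.nsmul]
  refine hl.mono _ _ (le_inf ?_ (nsmul_le_nsmul_right inf_le_right k))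
  exact (nsmul_le_nsmul_right inf_le_left k).trans (le_add_of_nonneg_right (h0 s))

include hA

theorem kA (k : ℕ) : (k * l (x ⊓ y) : ℝ≥0∞) ≠ ∞ := ENNReal.mul_ne_top (by simp) hA

include hdist

theorem cF_mono_k (s : S) : Monotone fun k => cF l x y k s := by
  refine monotone_nat_of_le_succ fun k => ?_
  rw [← ENNReal.add_le_add_iff_right (kA hl h0 hA (k+1)), cF_add hl h0]
  push_cast
  rw [add_mul, one_mul, ← add_assoc, cF_add hl h0, ← hl.add]
  refine hl.mono _ _ (le_inf ?_ ?_)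
  · refine (add_le_add inf_le_left inf_le_left).trans (le_of_eq ?_)
    rw [succ_nsmul]; abel
  · refine (add_le_add inf_le_right inf_le_right).trans (le_of_eq ?_)
    rw [succ_nsmul]

theorem cF_super (k : ℕ) (s t : S) : cF l x y k s + cF l x y k t ≤ cF l x y (k + k) (s + t) := by
  rw [← ENNReal.add_le_add_iff_right (kA hl h0 hA (k+k)), cF_add hl h0]
  push_cast
  rw [add_mul, add_add_add_comm, cF_add hl h0, cF_add hl h0, ← hl.add]
  refine hl.mono _ _ (le_inf ?_ ?_)
  · refine (add_le_add inf_le_left inf_le_left).trans (le_of_eq ?_)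
    rw [add_nsmul]; abel
  · refine (add_le_add inf_le_right inf_le_right).trans (le_of_eq ?_)
    rw [add_nsmul]

theorem cF_sub (k : ℕ) (s t : S) : cF l x y k (s + t) ≤ cF l x y k s + cF l x y k t := by
  rw [← ENNReal.add_le_add_iff_right (kA hl h0 hA (k+k))]
  push_cast
  rw [add_mul, add_add_add_comm (cF l x y k s), cF_add hl h0, cF_add hl h0, ← hl.add,
    ← add_assoc, cF_add hl h0, ← hl.nsmul, ← hl.add]
  refine hl.mono _ _ ?_
  have hx := nsmul_le_nsmul_right (inf_le_left : x ⊓ y ≤ x) k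
  have hy := nsmul_le_nsmul_right (inf_le_right : x ⊓ y ≤ y) k
  refine le_inf_add_inf hdist ?_ ?_ ?_ ?_
  · exact (add_le_add inf_le_left hx).trans (le_of_eq (by abel))
  · refine (add_le_add inf_le_right hx).trans ?_
    rw [add_comm (k • y)]
    exact add_le_add (le_add_of_nonneg_right (h0 s)) le_rfl
  · refine (add_le_add inf_le_right hx).trans ?_
    exact add_le_add le_rfl (le_add_of_nonneg_right (h0 t))
  · exact add_le_add inf_le_right hy

theorem l1_le (s : S) : l1 l x y s ≤ l s := by
  refine iSup_le fun k => ?_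
  have h1 : l (k • x ⊓ k • y) ≤ k * l (x ⊓ y) := by
    rw [← ENNReal.add_le_add_iff_right (kA hl h0 hA k)]
    have := hl.mono _ _ (inf_nsmul_add_le hdist x y k)
    rw [hl.add, hl.nsmul, hl.nsmul] at this
    push_cast at this
    rwa [add_mul] at this
  rw [← ENNReal.add_le_add_iff_right (kA hl h0 hA k), cF_add hl h0]
  calc _ ≤ l (k • x ⊓ k • y + s) := by
        refine hl.mono _ _ ?_
        rw [← hdist]
        exact inf_le_inf_left _ (le_add_of_nonneg_right (h0 s))
    _ = l (k • x ⊓ k • y) + l s := hl.add _ _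
    _ ≤ _ := by rw [add_comm]; gcongr

theorem l1_pre : PreF (l1 l x y) where
  zero := le_antisymm ((l1_le hl hdist h0 hA 0).trans hl.zero.le) bot_le
  add s t := by
    apply le_antisymm
    · refine iSup_le fun k => (cF_sub hl hdist h0 hA k s t).trans ?_
      exact add_le_add (le_iSup (fun k => cF l x y k s) k) (le_iSup (fun k => cF l x y k t) k)
    · unfold l1
      rw [ENNReal.iSup_add_iSup_of_monotone (cF_mono_k hl hdist h0 hA s)
        (cF_mono_k hl hdist h0 hA t)]
      exact iSup_le fun k => (cF_super hl hdist h0 hA k s t).trans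
        (le_iSup (fun k => cF l x y k (s + t)) (k + k))
  mono s t hst := by
    refine iSup_mono fun k => tsub_le_tsub_right (hl.mono _ _ ?_) _
    exact inf_le_inf_right _ (add_le_add le_rfl hst)

theorem g_add (r : S) : (l r - l1 l x y r) + l1 l x y r = l r :=
  tsub_add_cancel_of_le (l1_le hl hdist h0 hA r)

theorem l1_ne {r : S} (hr : l r ≠ ∞) : l1 l x y r ≠ ∞ :=
  ne_top_of_le_ne_top hr (l1_le hl hdist h0 hA r)

theorem g_mono {s t : S} (hst : s ≤ t) (ht : l t ≠ ∞) :
    l s - l1 l x y s ≤ l t - l1 l x y t := by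
  have hs : l s ≠ ∞ := ne_top_of_le_ne_top ht (hl.mono _ _ hst)
  have key : l s + l1 l x y t ≤ l t + l1 l x y s := by
    rw [l1, ENNReal.add_iSup]
    refine iSup_le fun k => le_trans ?_ (add_le_add le_rfl (le_iSup (fun k => cF l x y k s) k))
    rw [← ENNReal.add_le_add_iff_right (kA hl h0 hA k), add_assoc, add_assoc, cF_add hl h0,
      cF_add hl h0, ← hl.add, ← hl.add]
    refine hl.mono _ _ ?_
    rw [add_comm s, add_comm t, ← hdist, ← hdist]
    exact inf_le_inf (le_of_eq (by abel)) (add_le_add le_rfl hst)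
  rw [← ENNReal.add_le_add_iff_right (l1_ne hl hdist h0 hA hs),
    ← ENNReal.add_le_add_iff_right (l1_ne hl hdist h0 hA ht), g_add hl hdist h0 hA,
    add_right_comm, g_add hl hdist h0 hA]
  exact key

theorem g_plus {s t : S} (hs : l s ≠ ∞) (ht : l t ≠ ∞) :
    l (s + t) - l1 l x y (s + t) = (l s - l1 l x y s) + (l t - l1 l x y t) := by
  have hst : l (s + t) ≠ ∞ := by rw [hl.add]; exact ENNReal.add_ne_top.2 ⟨hs, ht⟩
  rw [← ENNReal.add_left_inj (l1_ne hl hdist h0 hA hst), g_add hl hdist h0 hA, hl.add,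
    (l1_pre hl hdist h0 hA).add, add_add_add_comm, g_add hl hdist h0 hA, g_add hl hdist h0 hA]

theorem le_l2 {r s : S} (hrs : r ≤ s) (hr : l r ≠ ∞) : l r - l1 l x y r ≤ l2 l x y s :=
  le_iSup (fun r : {r : S // r ≤ s ∧ l r ≠ ∞} => (l r - l1 l x y r)) ⟨r, hrs, hr⟩

theorem l2_pre : PreF (l2 l x y) where
  zero := by
    refine le_antisymm (iSup_le fun r => ?_) bot_le
    exact tsub_le_self.trans ((hl.mono _ _ r.2.1).trans hl.zero.le)
  add s t := by
    apply le_antisymm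
    · refine iSup_le fun r => ?_
      obtain ⟨r, hr, hf⟩ := r
      have h1 : l (r ⊓ s) ≠ ∞ := ne_top_of_le_ne_top hf (hl.mono _ _ inf_le_left)
      have h2 : l (r ⊓ t) ≠ ∞ := ne_top_of_le_ne_top hf (hl.mono _ _ inf_le_left)
      have hle : r ≤ r ⊓ s + r ⊓ t := by
        rw [← hdist, add_comm r, add_comm s, ← hdist, ← hdist]
        refine le_inf (le_inf ?_ ?_) (le_inf ?_ ?_)
        · exact le_add_of_nonneg_right (h0 _)
        · exact le_add_of_nonneg_left (h0 _)
        · exact le_add_of_nonneg_right (h0 _)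
        · rwa [add_comm]
      calc _ ≤ _ := g_mono hl hdist h0 hA hle
              (by rw [hl.add]; exact ENNReal.add_ne_top.2 ⟨h1, h2⟩)
        _ = _ := g_plus hl hdist h0 hA h1 h2
        _ ≤ _ := add_le_add (le_l2 hl hdist h0 hA inf_le_right h1)
          (le_l2 hl hdist h0 hA inf_le_right h2)
    · have hz : ∀ u : S, Nonempty {r : S // r ≤ u ∧ l r ≠ ∞} := fun u =>
        ⟨0, h0 u, by simp [hl.zero]⟩
      have := hz s
      have := hz t
      refine ENNReal.iSup_add_iSup_le fun r q => ?_
      rw [← g_plus hl hdist h0 hA r.2.2 q.2.2]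
      refine le_l2 hl hdist h0 hA (add_le_add r.2.1 q.2.1) ?_
      rw [hl.add]; exact ENNReal.add_ne_top.2 ⟨r.2.2, q.2.2⟩
  mono s t hst := iSup_le fun r => le_l2 hl hdist h0 hA (r.2.1.trans hst) r.2.2

theorem l1_l2_le : l1 l x y x + l2 l x y y ≤ l (x ⊓ y) := by
  have : Nonempty {r : S // r ≤ y ∧ l r ≠ ∞} := ⟨0, h0 y, by simp [hl.zero]⟩
  refine ENNReal.iSup_add_iSup_le fun k r => ?_
  obtain ⟨r, hr, hf⟩ := r
  rw [← ENNReal.add_le_add_iff_right (l1_ne hl hdist h0 hA hf), add_assoc, g_add hl hdist h0 hA]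
  refine le_trans ?_ (add_le_add le_rfl (le_iSup (fun k => cF l x y k r) (k + 1)))
  rw [← ENNReal.add_le_add_iff_right (kA hl h0 hA k), add_right_comm, cF_add hl h0]
  have e : l (x ⊓ y) + cF l x y (k + 1) r + k * l (x ⊓ y)
      = cF l x y (k + 1) r + ((k + 1 : ℕ) : ℝ≥0∞) * l (x ⊓ y) := by push_cast; ring
  rw [e, cF_add hl h0, ← hl.add]
  refine hl.mono _ _ (le_inf ?_ ?_)
  · refine (add_le_add inf_le_left le_rfl).trans (le_of_eq ?_)
    rw [succ_nsmul]
  · refine (add_le_add inf_le_right hr).trans (le_of_eq ?_)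
    rw [succ_nsmul]

end

open Classical in
noncomputable def idF {S : Type*} [AddCommMonoid S] [PartialOrder S] (x s : S) : ℝ≥0∞ :=
  if ∃ k : ℕ, s ≤ k • x then 0 else ∞

theorem idF_pre {S : Type*} [AddCommMonoid S] [PartialOrder S] [IsOrderedAddMonoid S]
    (h0 : ∀ s : S, 0 ≤ s) (x : S) : PreF (idF x) where
  zero := if_pos ⟨0, h0 _⟩
  add s t := by
    unfold idF
    by_cases hs : ∃ k : ℕ, s ≤ k • x
    · by_cases ht : ∃ k : ℕ, t ≤ k • x
      · rw [if_pos hs, if_pos ht, if_pos, add_zero]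
        obtain ⟨k, hk⟩ := hs
        obtain ⟨j, hj⟩ := ht
        exact ⟨k + j, by rw [add_nsmul]; exact add_le_add hk hj⟩
      · rw [if_neg ht, if_neg, add_top]
        rintro ⟨k, hk⟩
        exact ht ⟨k, (le_add_of_nonneg_left (h0 s)).trans hk⟩
    · rw [if_neg hs, if_neg, top_add]
      rintro ⟨k, hk⟩
      exact hs ⟨k, (le_add_of_nonneg_right (h0 t)).trans hk⟩
  mono s t hst := by
    unfold idF
    by_cases ht : ∃ k : ℕ, t ≤ k • x
    · obtain ⟨k, hk⟩ := ht
      rw [if_pos ⟨k, hst.trans hk⟩]; exact bot_le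
    · rw [if_neg ht]; exact le_top

/-- In a countably based, inf-semilattice ordered Cu-semigroup with (O5), the rank map
preserves binary infima: if `λ(z) ≤ n·λ(x)` and `λ(z) ≤ n·λ(y)` for every functional
`λ`, then `λ(z) ≤ n·λ(x ⊓ y)` for every functional `λ`. -/
theorem functional_le_nsmul_inf {S : Type*} [AddCommMonoid S] [SemilatticeInf S]
    [CuSemigroup S] (hcb : CountablyBased S) (h5 : O5 S) (hdist : InfDistrib S)
    (x y z : S) (n : ℕ) (hn : 1 ≤ n)
    (h : ∀ lam : S → ENNReal, IsFunctional lam →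
      lam z ≤ n * lam x ∧ lam z ≤ n * lam y) :
    ∀ lam : S → ENNReal, IsFunctional lam → lam z ≤ n * lam (x ⊓ y) := by
  haveI : IsOrderedAddMonoid S := cuOrdered
  have h0 : ∀ s : S, 0 ≤ s := CuSemigroup.zero_le
  intro l hlf
  have hl : PreF l := ⟨hlf.1, hlf.2.1, hlf.2.2.1⟩
  by_cases hA : l (x ⊓ y) = ∞
  · rw [hA, ENNReal.mul_top (by simp; omega)]; exact le_top
  have H : ∀ f : S → ℝ≥0∞, PreF f → ∀ z', WayBelow z' z → f z' ≤ n * f x ∧ f z' ≤ n * f y := by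
    intro f hf z' hz
    have := h _ (regF_functional hf)
    exact ⟨(le_regF f hz).trans (this.1.trans (by gcongr; exact regF_le hf x)),
      (le_regF f hz).trans (this.2.trans (by gcongr; exact regF_le hf y))⟩
  have id0 : ∀ u : S, idF u u = 0 := fun u => if_pos ⟨1, by simp⟩
  have idm : ∀ u s : S, idF u s ≤ 0 → ∃ k : ℕ, s ≤ k • u := by
    intro u s hs
    by_contra hc
    rw [idF, if_neg hc] at hs
    simp at hs
  have main : ∀ z', WayBelow z' z → l z' ≤ n * l (x ⊓ y) := by
    intro z' hz
    have hfin : l z' ≠ ∞ := by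
      obtain ⟨k, hk⟩ := idm x z' (by simpa [id0] using (H _ (idF_pre h0 x) z' hz).1)
      obtain ⟨j, hj⟩ := idm y z' (by simpa [id0] using (H _ (idF_pre h0 y) z' hz).2)
      have h1 : z' ≤ (k + j) • x ⊓ (k + j) • y := le_inf
        (hk.trans (by rw [add_nsmul]; exact le_add_of_nonneg_right (h0 _)))
        (hj.trans (by rw [add_nsmul]; exact le_add_of_nonneg_left (h0 _)))
      have h2 : z' ≤ ((k + j) + (k + j)) • (x ⊓ y) :=
        (h1.trans (le_add_of_nonneg_right (h0 _))).trans (inf_nsmul_add_le hdist x y (k + j))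
      refine ne_top_of_le_ne_top ?_ (hl.mono _ _ h2)
      rw [hl.nsmul]
      exact ENNReal.mul_ne_top (by simp) hA
    calc l z' = (l z' - l1 l x y z') + l1 l x y z' := (g_add hl hdist h0 hA z').symm
      _ ≤ l2 l x y z' + l1 l x y z' := by gcongr; exact le_l2 hl hdist h0 hA le_rfl hfin
      _ ≤ n * l2 l x y y + n * l1 l x y x := add_le_add
          (H _ (l2_pre hl hdist h0 hA) z' hz).2 (H _ (l1_pre hl hdist h0 hA) z' hz).1
      _ = n * (l1 l x y x + l2 l x y y) := by ring
      _ ≤ _ := by gcongr; exact l1_l2_le hl hdist h0 hA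
  obtain ⟨f, hf, hs⟩ := CuSemigroup.O2 z
  rw [hlf.2.2.2 f z (wb_seq_mono hf) hs]
  exact iSup_le fun k => main _ (wb_trans_le (hf k) (hs.1 ⟨k + 1, rfl⟩))
end
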